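/- arXiv:0908.0826 — 6 statements merged into one kernel-verified Lean document; each statement's English description precedes it below -/
import Mathlib

section
/- Let k be an algebraically closed field of characteristic p > 0, let d be a positive integer and set q = p^d. Then the map F : k² → k² defined by F(a₁, a₂) = (a₁^q, a₁·(a₁^q − a₁) − a₂) is bijective; moreover, for the polynomials P₁ = X₁^q and P₂ = X₁·(X₁^q − X₁) − X₂ in k[X₁, X₂], the Jacobian determinant (∂P₁/∂X₁)·(∂P₂/∂X₂) − (∂P₁/∂X₂)·(∂P₂/∂X₁) is the zero polynomial. -/
open MvPolynomial

/-!
The `q`-power map is an iterate of Frobenius, hence injective on a field, and it is surjective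
because `k` is algebraically closed. So the first coordinate of `F` determines `a₁`, and the
second one is then an affine function of `a₂` with slope `-1`; this makes `F` bijective.
The Jacobian vanishes because its first row, the gradient of `X₀ ^ q`, is zero in
characteristic `p`.
-/

/-- Over an algebraically closed field of characteristic `p > 0`, with `q = p^d`, the map
`(a₁, a₂) ↦ (a₁^q, a₁(a₁^q − a₁) − a₂)` is bijective, while the Jacobian determinant of the
defining polynomials is identically zero. -/
theorem bijective_nonseparable_map
    (k : Type*) [Field k] [IsAlgClosed k] (p : ℕ) [Fact p.Prime] [CharP k p]
    (d : ℕ) (hd : 0 < d) (q : ℕ) (hq : q = p ^ d)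
    (F : k × k → k × k)
    (hF : F = fun a => (a.1 ^ q, a.1 * (a.1 ^ q - a.1) - a.2))
    (P₁ P₂ : MvPolynomial (Fin 2) k)
    (hP₁ : P₁ = X 0 ^ q)
    (hP₂ : P₂ = X 0 * (X 0 ^ q - X 0) - X 1) :
    Function.Bijective F ∧
      pderiv 0 P₁ * pderiv 1 P₂ - pderiv 1 P₁ * pderiv 0 P₂ = 0 := by
  subst hq hF hP₁ hP₂
  refine ⟨⟨?_, ?_⟩, ?_⟩
  · rintro ⟨a, b⟩ ⟨c, e⟩ h
    simp only [Prod.mk.injEq] at h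
    obtain ⟨h₁, h₂⟩ := h
    obtain rfl : a = c := iterateFrobenius_inj k p d (by simpa [iterateFrobenius_def] using h₁)
    exact Prod.ext rfl (sub_right_injective h₂)
  · rintro ⟨x, y⟩
    obtain ⟨z, hz⟩ := IsAlgClosed.exists_pow_nat_eq x (pow_pos (Fact.out : p.Prime).pos d)
    exact ⟨(z, z * (x - z) - y), by simp [hz]⟩
  · -- `X₀ ^ q` has zero gradient because `q = 0` in `k`; this is where `0 < d` enters.
    simp [Derivation.leibniz_pow, hd.ne']
end

section
/- Let k be a field and let D be a finitely generated additive submonoid of ℤⁿ with D ∩ (−D) = {0}. Set D₊ = D \ {0} and let H = D₊ \ (D₊ + D₊) be the Hilbert basis of D. In the monoid algebra k[D] (the k-algebra with basis {e^d : d ∈ D} and multiplication e^d · e^{d'} = e^{d+d'}), let I be the ideal spanned over k by {e^d : d ∈ D₊}. Then I² is the k-span of {e^d : d ∈ D₊ + D₊}, and the k-vector space I/I² has dimension equal to the (finite) cardinality of H. -/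
open Pointwise

/-!
The argument reads everything off the monomial basis. An element of `k[D]` lies in the `k`-span of
`{e^d : d ∈ S}` exactly when its coefficients vanish outside `S` (`mem_span_monomials_iff`).
Since `I` is the span of `{e^d : d ∈ D₊}`, its square is spanned by the products
`e^a e^b = e^(a+b)` with `a, b ∈ D₊`. Hence the linear map `I → k^(H)` that restricts coefficients
to `H = D₊ \ (D₊ + D₊)` is onto and has kernel `I²`, so that `I/I²` has the monomials of `H` as a
basis. Finally, `H` is finite because every generating set of `D` contains it
(`indecomposable_mem_of_closure_eq_top`).
-/

/-- A nonzero element that is not a sum of two nonzero elements belongs to every generating set: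
a sum of generators representing it can have only one nonzero term. -/
lemma indecomposable_mem_of_closure_eq_top {M : Type*} [AddCommMonoid M] {S : Set M}
    (hS : AddSubmonoid.closure S = ⊤) {x : M}
    (hx : x ∈ {d : M | d ≠ 0} \ ({d : M | d ≠ 0} + {d : M | d ≠ 0})) : x ∈ S := by
  have hmem : x ∈ AddSubmonoid.closure S := hS ▸ AddSubmonoid.mem_top x
  induction hmem using AddSubmonoid.closure_induction with
  | mem x h => exact h
  | zero => exact absurd rfl hx.1
  | add a b _ _ iha ihb =>
    by_cases ha : a = 0
    · subst ha
      rw [zero_add] at hx ⊢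
      exact ihb hx
    · by_cases hb : b = 0
      · subst hb
        rw [add_zero] at hx ⊢
        exact iha hx
      · exact absurd (Set.add_mem_add ha hb) hx.2

lemma mem_span_monomials_iff {k M : Type*} [Field k] (S : Set M) (x : AddMonoidAlgebra k M) :
    x ∈ Submodule.span k ((fun d : M => AddMonoidAlgebra.single d (1 : k)) '' S) ↔
      ∀ d, d ∉ S → x.coeff d = 0 := by
  rw [← AddMonoidAlgebra.supported_eq_span_single, AddMonoidAlgebra.mem_supported']

/-- For a finitely generated pointed submonoid `D ⊆ ℤⁿ`, in the monoid algebra `k[D]` the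
square of the augmentation ideal `I = span{e^d : d ∈ D₊}` is the `k`-span of
`{e^d : d ∈ D₊ + D₊}`, and `dim_k I/I²` equals the cardinality of the Hilbert basis
`H = D₊ \ (D₊ + D₊)`. -/
theorem cotangent_dim_eq_card_hilbert_basis
    (k : Type) [Field k] (n : ℕ) (D : AddSubmonoid (Fin n → ℤ))
    (hfg : D.FG)
    (hpointed : ∀ x : Fin n → ℤ, x ∈ D → -x ∈ D → x = 0)
    (Dplus : Set D) (hDplus : Dplus = {d : D | d ≠ 0})
    (H : Set D) (hH : H = Dplus \ (Dplus + Dplus))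
    (e : D → AddMonoidAlgebra k D)
    (he : ∀ d : D, e d = AddMonoidAlgebra.single d (1 : k))
    (I : Ideal (AddMonoidAlgebra k D))
    (hI : (I : Set (AddMonoidAlgebra k D)) =
      (Submodule.span k (e '' Dplus) : Submodule k (AddMonoidAlgebra k D))) :
    ((I ^ 2 : Ideal (AddMonoidAlgebra k D)) : Set (AddMonoidAlgebra k D)) =
      (Submodule.span k (e '' (Dplus + Dplus)) : Submodule k (AddMonoidAlgebra k D)) ∧
    H.Finite ∧
    Module.rank k
      ((Submodule.restrictScalars k I) ⧸
        (Submodule.comap (Submodule.restrictScalars k I).subtype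
          (Submodule.restrictScalars k (I ^ 2)))) = Cardinal.mk H := by
  obtain rfl : e = fun d => AddMonoidAlgebra.single d (1 : k) := funext he
  subst hDplus hH
  set P : Set D := {d : D | d ≠ 0} with hP
  have hmemI : ∀ x, x ∈ I ↔ ∀ d, d ∉ P → x.coeff d = 0 := fun x => by
    rw [← mem_span_monomials_iff, ← SetLike.mem_coe, hI, SetLike.mem_coe]
  have hsq : ((I ^ 2 : Ideal (AddMonoidAlgebra k D)) : Set (AddMonoidAlgebra k D)) =
      (Submodule.span k ((fun d : D => AddMonoidAlgebra.single d (1 : k)) '' (P + P)) :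
        Submodule k (AddMonoidAlgebra k D)) := by
    -- The `k`-span of monomials is multiplicative in the set of exponents.
    have hspan : Submodule.span k ((fun d : D => AddMonoidAlgebra.single d (1 : k)) '' (P + P)) =
        Submodule.span k ((fun d : D => AddMonoidAlgebra.single d (1 : k)) '' P) *
        Submodule.span k ((fun d : D => AddMonoidAlgebra.single d (1 : k)) '' P) := by
      rw [Submodule.span_mul_span]
      congr 1
      simp only [← Set.image2_mul, ← Set.image2_add, Set.image_image2, Set.image2_image_left,
        Set.image2_image_right, AddMonoidAlgebra.single_mul_single, mul_one]
    have hI' : ∀ x, x ∈ I ↔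
        x ∈ Submodule.span k ((fun d : D => AddMonoidAlgebra.single d (1 : k)) '' P) := fun x => by
      rw [← SetLike.mem_coe, hI, SetLike.mem_coe]
    ext x
    rw [hspan, SetLike.mem_coe, SetLike.mem_coe, pow_two]
    constructor
    · intro hx
      induction hx using Submodule.mul_induction_on' with
      | mem_mul_mem a ha b hb => exact Submodule.mul_mem_mul ((hI' a).1 ha) ((hI' b).1 hb)
      | add a _ b _ iha ihb => exact add_mem iha ihb
    · intro hx
      induction hx using Submodule.mul_induction_on' with
      | mem_mul_mem a ha b hb => exact Ideal.mul_mem_mul ((hI' a).2 ha) ((hI' b).2 hb)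
      | add a _ b _ iha ihb => exact add_mem iha ihb
  have hmemI2 : ∀ x, x ∈ I ^ 2 ↔ ∀ d, d ∉ P + P → x.coeff d = 0 := fun x => by
    rw [← mem_span_monomials_iff, ← SetLike.mem_coe, hsq, SetLike.mem_coe]
  refine ⟨hsq, ?_, ?_⟩
  · obtain ⟨S, hS⟩ := (AddMonoid.fg_iff_addSubmonoid_fg D).2 hfg |>.fg_top
    exact S.finite_toSet.subset fun x hx => indecomposable_mem_of_closure_eq_top hS hx
  · let f : Submodule.restrictScalars k I →ₗ[k] (↥(P \ (P + P)) →₀ k) :=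
      Finsupp.lsubtypeDomain (P \ (P + P)) ∘ₗ
        (AddMonoidAlgebra.coeffLinearEquiv k).toLinearMap ∘ₗ
          (Submodule.restrictScalars k I).subtype
    have hf : ∀ x h, f x h = (x : AddMonoidAlgebra k D).coeff h := fun x h => rfl
    have hsurj : Function.Surjective f := by
      intro g
      refine ⟨⟨.ofCoeff (g.mapDomain Subtype.val), (hmemI _).2 fun d hd => ?_⟩, ?_⟩
      · refine Finsupp.mapDomain_of_notMem_range _ _ ?_
        rintro ⟨h, rfl⟩
        exact hd h.2.1
      · ext h
        rw [hf]
        exact Finsupp.mapDomain_apply Subtype.val_injective _ _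
    have hker : LinearMap.ker f = Submodule.comap (Submodule.restrictScalars k I).subtype
        (Submodule.restrictScalars k (I ^ 2)) := by
      ext x
      rw [LinearMap.mem_ker, Submodule.mem_comap, Submodule.restrictScalars_mem, hmemI2]
      constructor
      · intro hx d hd
        by_cases hdP : d ∈ P
        · exact (hf x ⟨d, hdP, hd⟩).symm.trans (by rw [hx]; rfl)
        · exact (hmemI _).1 x.2 d hdP
      · intro hx
        ext h
        exact hx h h.2.2
    rw [← hker, (f.quotKerEquivOfSurjective hsurj).rank_eq, rank_finsupp_self']
end

section
/- Let k be a field and let D be a finitely generated additive submonoid of ℤⁿ with D ∩ (−D) = {0}. Set D₊ = D \ {0} and let H = D₊ \ (D₊ + D₊) be the Hilbert basis of D. Then in the monoid algebra k[D]: (a) every subset of k[D] that generates k[D] as a k-algebra has cardinality at least |H|; and (b) the set {e^h : h ∈ H} generates k[D] as a k-algebra. Consequently the minimal number of k-algebra generators of k[D] equals |H|. -/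
open Pointwise

/-!
Both parts rest on the indecomposable elements of a commutative cancellative monoid `M` without
nonzero units, which for `M = D` form exactly `H`.

For the lower bound, let `φ : k[M] → (H →₀ k)` record the coefficients at the indecomposables. An
indecomposable `h` decomposes only as `0 + h = h + 0`, so `φ` is a derivation along the
augmentation: `φ (x * y) = x₀ • φ y + y₀ • φ x` with `x₀` the coefficient of `x` at `0`, and
`φ 1 = 0`. In other words, `φ` is the projection onto the cotangent space `𝔪 / 𝔪²` at the
augmentation ideal. Hence the elements whose image lies in the span of `φ '' S` form a subalgebra
containing `S`. If `S` generates `k[M]`, then `φ '' S` spans the range of `φ`, a vector space of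
dimension `|H|`, and so `|H| ≤ |S|`.

For generation, `h ↦ e^h` is multiplicative, so it suffices that `H` generates the monoid `D`; this
is `AddSubmonoid.closure_addIrreducible`.
-/

open AddMonoidAlgebra in
/-- The coefficient at an indecomposable element is a derivation along the augmentation. -/
lemma coeff_mul_of_addIrreducible {k M : Type*} [Field k] [AddCommMonoid M]
    [Subsingleton (AddUnits M)] {h : M} (hh : AddIrreducible h) (x y : AddMonoidAlgebra k M) :
    (x * y).coeff h = x.coeff 0 * y.coeff h + y.coeff 0 * x.coeff h := by
  classical
  have h0 : h ≠ 0 := hh.ne_zero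
  rw [coeff_mul_antidiag x y h {(0, h), (h, 0)}]
  · rw [Finset.sum_pair (by simp [h0.symm])]
    ring
  · rintro ⟨a, b⟩
    simp only [Finset.mem_insert, Finset.mem_singleton, Prod.mk.injEq]
    constructor
    · rintro (⟨rfl, rfl⟩ | ⟨rfl, rfl⟩) <;> simp
    · intro hab
      subst hab
      rcases hh.eq_zero_or_eq_zero with rfl | rfl <;> simp

open AddMonoidAlgebra in
/-- An algebra generating set has at least as many elements as there are indecomposables. -/
lemma mk_addIrreducible_le_of_adjoin_eq_top {k M : Type} [Field k] [AddCommMonoid M]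
    [Subsingleton (AddUnits M)] (S : Set (AddMonoidAlgebra k M)) (hS : Algebra.adjoin k S = ⊤) :
    Cardinal.mk {p : M | AddIrreducible p} ≤ Cardinal.mk S := by
  classical
  let φ : AddMonoidAlgebra k M →ₗ[k] ({p : M | AddIrreducible p} →₀ k) :=
    { toFun x := x.coeff.comapDomain Subtype.val Subtype.val_injective.injOn
      map_add' _ _ := by ext; simp
      map_smul' _ _ := by ext; simp }
  have hφ (x) (p) : φ x p = x.coeff p.1 := rfl
  have key (x : AddMonoidAlgebra k M) : φ x ∈ Submodule.span k (φ '' S) := by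
    have hx : x ∈ Algebra.adjoin k S := hS ▸ Algebra.mem_top
    induction hx using Algebra.adjoin_induction with
    | mem x hx => exact Submodule.subset_span ⟨x, hx, rfl⟩
    | algebraMap r =>
      convert Submodule.zero_mem _
      ext p
      have : (0 : M) ≠ p := p.2.ne_zero.symm
      simp [hφ, this]
    | add x y _ _ hx hy => rw [map_add]; exact add_mem hx hy
    | mul x y _ _ hx hy =>
      have : φ (x * y) = x.coeff 0 • φ y + y.coeff 0 • φ x := by
        ext p
        simp [hφ, coeff_mul_of_addIrreducible p.2]
      rw [this]
      exact add_mem (Submodule.smul_mem _ _ hy) (Submodule.smul_mem _ _ hx)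
  have hspan : Submodule.span k (φ '' S) = ⊤ := by
    rw [eq_top_iff, ← Finsupp.basisSingleOne.span_eq, Submodule.span_le]
    rintro _ ⟨p, rfl⟩
    have : Finsupp.basisSingleOne p = φ (single p.1 1) := by
      ext q
      simp [hφ, Finsupp.single_apply, Subtype.ext_iff]
    exact this ▸ key _
  have hle := Finsupp.basisSingleOne.le_span hspan
  rw [Cardinal.mk_range_eq _ Finsupp.basisSingleOne.injective] at hle
  exact hle.trans Cardinal.mk_image_le

/-- For a finitely generated pointed submonoid `D ⊆ ℤⁿ` with Hilbert basis
`H = D₊ \ (D₊ + D₊)`: every `k`-algebra generating set of the monoid algebra `k[D]` has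
cardinality at least `|H|`, and `{e^h : h ∈ H}` generates `k[D]` as a `k`-algebra. -/
theorem minimal_generators_of_monoid_algebra
    (k : Type) [Field k] (n : ℕ) (D : AddSubmonoid (Fin n → ℤ))
    (hfg : D.FG)
    (hpointed : ∀ x : Fin n → ℤ, x ∈ D → -x ∈ D → x = 0)
    (Dplus : Set D) (hDplus : Dplus = {d : D | d ≠ 0})
    (H : Set D) (hH : H = Dplus \ (Dplus + Dplus))
    (e : D → AddMonoidAlgebra k D)
    (he : ∀ d : D, e d = AddMonoidAlgebra.single d (1 : k)) :
    (∀ S : Set (AddMonoidAlgebra k D),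
        Algebra.adjoin k S = ⊤ → Cardinal.mk H ≤ Cardinal.mk S) ∧
      Algebra.adjoin k (e '' H) = ⊤ := by
  have hunits : Subsingleton (AddUnits D) := by
    refine ⟨fun u v => ?_⟩
    have key (w : AddUnits D) : (w : D) = 0 := by
      refine Subtype.ext (hpointed _ w.val.2 ?_)
      have hw : (w.val : Fin n → ℤ) + (w.neg : D) = 0 := congrArg Subtype.val w.val_neg
      rw [neg_eq_of_add_eq_zero_right hw]
      exact w.neg.2
    exact AddUnits.ext ((key u).trans (key v).symm)
  have hHirr : H = {p : D | AddIrreducible p} := by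
    subst hH hDplus
    ext d
    simp only [Set.mem_sdiff, Set.mem_add, Set.mem_ofPred_eq, addIrreducible_iff,
      isAddUnit_iff_eq_zero]
    grind
  have : AddMonoid.FG D := (AddMonoid.fg_iff_addSubmonoid_fg D).2 hfg
  refine ⟨fun S hS => hHirr ▸ mk_addIrreducible_le_of_adjoin_eq_top S hS, ?_⟩
  have hgen (d : D) : e d ∈ Algebra.adjoin k (e '' H) := by
    have hd : d ∈ AddSubmonoid.closure H := by
      have htop : AddSubmonoid.closure {p : D | AddIrreducible p} = ⊤ := by
        let _ : AddCancelCommMonoid D :=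
          { (inferInstance : AddCommMonoid D) with
            add_left_cancel := fun a b c h => Subtype.ext (add_left_cancel (congrArg Subtype.val h)) }
        exact AddSubmonoid.closure_addIrreducible
      rw [hHirr, htop]
      trivial
    induction hd using AddSubmonoid.closure_induction with
    | mem d hd => exact Algebra.subset_adjoin ⟨d, hd, rfl⟩
    | zero => rw [he]; exact one_mem _
    | add a b _ _ ha hb =>
      have : e (a + b) = e a * e b := by simp [he]
      rw [this]
      exact mul_mem ha hb
  refine eq_top_iff.2 fun x _ => ?_
  induction x using AddMonoidAlgebra.induction_linear with
  | zero => exact zero_mem _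
  | add x y hx hy => exact add_mem (hx trivial) (hy trivial)
  | single d r =>
    have : AddMonoidAlgebra.single d r = r • e d := by simp [he]
    rw [this]
    exact Subalgebra.smul_mem _ (hgen d) r
end

section
/- Let k be a field with char k ≠ 2. Let τ be the k-algebra automorphism of the polynomial ring k[y₁, …, y₇] determined by τ(yⱼ) = −yⱼ for j ∈ {2, 5, 7} and τ(yᵢ) = yᵢ for i ∈ {1, 3, 4, 6}. Then the invariant subalgebra {f : τ(f) = f} equals the k-subalgebra generated by the ten elements y₁, y₃, y₄, y₆, y₂², y₅², y₇², y₂y₅, y₂y₇, y₅y₇; moreover, every subset of the invariant subalgebra that generates it as a k-algebra has cardinality at least 10. -/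
/-!
Call the variables `X 1, X 4, X 6` odd and the others even, and let `S` be the subalgebra generated
by the ten elements.

*Generators.* The `S`-module spanned by `1, X 1, X 4, X 6` is stable under multiplication by every
variable, so it is the whole polynomial ring (`exists_decomp`). Applying `τ` to
`p = a + b X 1 + c X 4 + d X 6` negates the last three terms, so `τ p = p` forces `2 p = 2 a`,
hence `p = a ∈ S`.

*Minimality.* For an invariant `f`, consider the first derivatives at the origin in the even
directions and the second derivatives at the origin in the odd directions, ten numbers in all
(`jet`). The first derivatives of an invariant in the odd directions vanish at the origin, so `jet`
satisfies the Leibniz rule `jet (f g) = f(0) jet g + g(0) jet f` on invariants. Therefore the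
`jet`s of a generating set span the image of `jet`, which is all of `k ^ 10` because `2` is
invertible. In other words, `jet` identifies the cotangent space at the origin with `k ^ 10`.
-/

open MvPolynomial

/-- The subalgebra generated by the ten elements. -/
noncomputable abbrev tenGen (k : Type*) [Field k] : Subalgebra k (MvPolynomial (Fin 7) k) :=
  Algebra.adjoin k
    {X 0, X 2, X 3, X 5,
      X 1 ^ 2, X 4 ^ 2, X 6 ^ 2,
      X 1 * X 4, X 1 * X 6, X 4 * X 6}

/-- The polynomial ring is generated by `1, X 1, X 4, X 6` as a module over `tenGen k`. -/
lemma exists_decomp {k : Type*} [Field k] (p : MvPolynomial (Fin 7) k) :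
    ∃ a ∈ tenGen k, ∃ b ∈ tenGen k, ∃ c ∈ tenGen k, ∃ d ∈ tenGen k,
      p = a + b * X 1 + c * X 4 + d * X 6 := by
  have h0 : X 0 ∈ tenGen k := Algebra.subset_adjoin (by simp)
  have h2 : X 2 ∈ tenGen k := Algebra.subset_adjoin (by simp)
  have h3 : X 3 ∈ tenGen k := Algebra.subset_adjoin (by simp)
  have h5 : X 5 ∈ tenGen k := Algebra.subset_adjoin (by simp)
  have h11 : X 1 ^ 2 ∈ tenGen k := Algebra.subset_adjoin (by simp)
  have h44 : X 4 ^ 2 ∈ tenGen k := Algebra.subset_adjoin (by simp)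
  have h66 : X 6 ^ 2 ∈ tenGen k := Algebra.subset_adjoin (by simp)
  have h14 : X 1 * X 4 ∈ tenGen k := Algebra.subset_adjoin (by simp)
  have h16 : X 1 * X 6 ∈ tenGen k := Algebra.subset_adjoin (by simp)
  have h46 : X 4 * X 6 ∈ tenGen k := Algebra.subset_adjoin (by simp)
  induction p using MvPolynomial.induction_on with
  | C r =>
    exact ⟨C r, (tenGen k).algebraMap_mem r, 0, zero_mem _, 0, zero_mem _, 0, zero_mem _,
      by ring⟩
  | add p q hp hq =>
    obtain ⟨a, ha, b, hb, c, hc, d, hd, rfl⟩ := hp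
    obtain ⟨a', ha', b', hb', c', hc', d', hd', rfl⟩ := hq
    exact ⟨_, add_mem ha ha', _, add_mem hb hb', _, add_mem hc hc', _, add_mem hd hd', by ring⟩
  | mul_X p i hp =>
    obtain ⟨a, ha, b, hb, c, hc, d, hd, rfl⟩ := hp
    have even : ∀ x ∈ tenGen k, ∃ a' ∈ tenGen k, ∃ b' ∈ tenGen k, ∃ c' ∈ tenGen k,
        ∃ d' ∈ tenGen k, (a + b * X 1 + c * X 4 + d * X 6) * x =
          a' + b' * X 1 + c' * X 4 + d' * X 6 := fun x hx =>
      ⟨_, mul_mem ha hx, _, mul_mem hb hx, _, mul_mem hc hx, _, mul_mem hd hx, by ring⟩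
    fin_cases i
    · exact even _ h0
    · exact ⟨_, add_mem (add_mem (mul_mem hb h11) (mul_mem hc h14)) (mul_mem hd h16),
        a, ha, 0, zero_mem _, 0, zero_mem _, by simp only [Fin.mk_one]; ring⟩
    · exact even _ h2
    · exact even _ h3
    · exact ⟨_, add_mem (add_mem (mul_mem hb h14) (mul_mem hc h44)) (mul_mem hd h46),
        0, zero_mem _, a, ha, 0, zero_mem _, by simp only [Fin.reduceFinMk]; ring⟩
    · exact even _ h5
    · exact ⟨_, add_mem (add_mem (mul_mem hb h16) (mul_mem hc h46)) (mul_mem hd h66),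
        0, zero_mem _, 0, zero_mem _, a, ha, by simp only [Fin.reduceFinMk]; ring⟩

/-- The first partial derivative at the origin. -/
noncomputable def d1 (k : Type*) [Field k] (i : Fin 7) : MvPolynomial (Fin 7) k →ₗ[k] k :=
  (aeval (0 : Fin 7 → k)).toLinearMap ∘ₗ (pderiv i).toLinearMap

/-- The second partial derivative at the origin. -/
noncomputable def d2 (k : Type*) [Field k] (i j : Fin 7) : MvPolynomial (Fin 7) k →ₗ[k] k :=
  d1 k i ∘ₗ (pderiv j).toLinearMap

/-- The first derivatives at the origin in the even directions, followed by the second derivatives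
at the origin in the odd directions. -/
noncomputable def jet (k : Type*) [Field k] : MvPolynomial (Fin 7) k →ₗ[k] (Fin 10 → k) :=
  LinearMap.pi ![d1 k 0, d1 k 2, d1 k 3, d1 k 5, d2 k 1 1, d2 k 4 4, d2 k 6 6,
    d2 k 1 4, d2 k 1 6, d2 k 4 6]

lemma d1_mul {k : Type*} [Field k] (i : Fin 7) (f g : MvPolynomial (Fin 7) k) :
    d1 k i (f * g) = aeval (0 : Fin 7 → k) f * d1 k i g + aeval (0 : Fin 7 → k) g * d1 k i f := by
  simp [d1]

/-- The second-order Leibniz rule at the origin, when the cross terms vanish. -/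
lemma d2_mul {k : Type*} [Field k] (i j : Fin 7) (f g : MvPolynomial (Fin 7) k)
    (fi : d1 k i f = 0) (fj : d1 k j f = 0) :
    d2 k i j (f * g) =
      aeval (0 : Fin 7 → k) f * d2 k i j g + aeval (0 : Fin 7 → k) g * d2 k i j f := by
  simp only [d1, d2, LinearMap.comp_apply, Derivation.coeFn_coe, AlgHom.toLinearMap_apply,
    Derivation.leibniz, smul_eq_mul, map_add, map_mul] at *
  rw [fi, fj]
  ring

/-- First derivatives in odd directions vanish at the origin on `tenGen k`. -/
lemma d1_odd {k : Type*} [Field k] {i : Fin 7} (hi : i = 1 ∨ i = 4 ∨ i = 6)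
    {f : MvPolynomial (Fin 7) k} (hf : f ∈ tenGen k) : d1 k i f = 0 := by
  induction hf using Algebra.adjoin_induction with
  | mem x hx =>
    simp only [Set.mem_insert_iff, Set.mem_singleton_iff] at hx
    rcases hi with rfl | rfl | rfl <;>
      rcases hx with rfl | rfl | rfl | rfl | rfl | rfl | rfl | rfl | rfl | rfl <;>
      simp [d1, pderiv_X]
  | algebraMap r => simp [d1, algebraMap_eq]
  | add x y _ _ hx hy => rw [map_add, hx, hy, add_zero]
  | mul x y _ _ hx hy => rw [d1_mul, hx, hy, mul_zero, mul_zero, add_zero]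

lemma jet_mul {k : Type*} [Field k] {f : MvPolynomial (Fin 7) k} (hf : f ∈ tenGen k)
    (g : MvPolynomial (Fin 7) k) :
    jet k (f * g) = aeval (0 : Fin 7 → k) f • jet k g + aeval (0 : Fin 7 → k) g • jet k f := by
  have h1 := d1_odd (i := 1) (by simp) hf
  have h4 := d1_odd (i := 4) (by simp) hf
  have h6 := d1_odd (i := 6) (by simp) hf
  ext j
  fin_cases j
  · exact d1_mul 0 f g
  · exact d1_mul 2 f g
  · exact d1_mul 3 f g
  · exact d1_mul 5 f g
  · exact d2_mul 1 1 f g h1 h1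
  · exact d2_mul 4 4 f g h4 h4
  · exact d2_mul 6 6 f g h6 h6
  · exact d2_mul 1 4 f g h1 h4
  · exact d2_mul 1 6 f g h1 h6
  · exact d2_mul 4 6 f g h4 h6

/-- Every vector is the `jet` of a linear combination of the ten generators. -/
lemma exists_jet_eq {k : Type*} [Field k] (h2 : (2 : k) ≠ 0) (v : Fin 10 → k) :
    ∃ f ∈ tenGen k, jet k f = v := by
  -- `X i ^ 2` has second derivative `2`, whence the halves.
  refine ⟨v 0 • X 0 + v 1 • X 2 + v 2 • X 3 + v 3 • X 5 + (v 4 / 2) • X 1 ^ 2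
    + (v 5 / 2) • X 4 ^ 2 + (v 6 / 2) • X 6 ^ 2 + v 7 • (X 1 * X 4) + v 8 • (X 1 * X 6)
    + v 9 • (X 4 * X 6), ?_, ?_⟩
  · have gen : ∀ r : k, ∀ x ∈ ({X 0, X 2, X 3, X 5, X 1 ^ 2, X 4 ^ 2, X 6 ^ 2,
        X 1 * X 4, X 1 * X 6, X 4 * X 6} : Set (MvPolynomial (Fin 7) k)), r • x ∈ tenGen k :=
      fun r x hx => Subalgebra.smul_mem _ (Algebra.subset_adjoin hx) r
    iterate 9 refine add_mem ?_ (gen _ _ (by simp))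
    exact gen _ _ (by simp)
  · ext j
    have c2 : constantCoeff (2 : MvPolynomial (Fin 7) k) = 2 := map_ofNat _ 2
    fin_cases j <;> simp [jet, d1, d2, pderiv_X, c2, h2]

/-- If `T` generates the algebra, then the `jet`s of its members span all `jet`s. -/
lemma jet_mem_span {k : Type*} [Field k] {A : Subalgebra k (MvPolynomial (Fin 7) k)}
    (hA : A = tenGen k) {T : Set A} (hT : Algebra.adjoin k T = ⊤) (x : A) :
    jet k x ∈ Submodule.span k ((fun t : A => jet k t) '' T) := by
  have hx : x ∈ Algebra.adjoin k T := hT ▸ Algebra.mem_top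
  induction hx using Algebra.adjoin_induction with
  | mem x hx => exact Submodule.subset_span ⟨x, hx, rfl⟩
  | algebraMap r =>
    have : jet k (C r) = 0 := by
      ext j
      fin_cases j <;> simp [jet, d1, d2]
    change jet k (C r) ∈ _
    rw [this]
    exact zero_mem _
  | add x y _ _ hx hy =>
    rw [Subalgebra.coe_add, map_add]
    exact add_mem hx hy
  | mul x y _ _ hx hy =>
    rw [Subalgebra.coe_mul, jet_mul (hA ▸ x.2)]
    exact add_mem (Submodule.smul_mem _ _ hy) (Submodule.smul_mem _ _ hx)

/-- For `char k ≠ 2`, the invariants of the automorphism of `k[y₁,…,y₇]` negating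
`y₂, y₅, y₇` form the subalgebra generated by the ten elements
`y₁, y₃, y₄, y₆, y₂², y₅², y₇², y₂y₅, y₂y₇, y₅y₇`, and every generating set of this
invariant algebra has cardinality at least `10`. (Variables are 0-indexed in Lean, so
`y_j` is `X (j−1)`.) -/
theorem invariants_E7_center_action
    (k : Type*) [Field k] (hchar : ringChar k ≠ 2)
    (τ : MvPolynomial (Fin 7) k →ₐ[k] MvPolynomial (Fin 7) k)
    (hτ : ∀ i : Fin 7, τ (X i) =
      if i = 1 ∨ i = 4 ∨ i = 6 then -X i else X i) :
    (AlgHom.equalizer τ (AlgHom.id k (MvPolynomial (Fin 7) k)) =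
        Algebra.adjoin k
          {X 0, X 2, X 3, X 5,
           X 1 ^ 2, X 4 ^ 2, X 6 ^ 2,
           X 1 * X 4, X 1 * X 6, X 4 * X 6}) ∧
      (∀ T : Set (AlgHom.equalizer τ (AlgHom.id k (MvPolynomial (Fin 7) k))),
        Algebra.adjoin k T = ⊤ → (10 : Cardinal) ≤ Cardinal.mk T) := by
  have two : (2 : k) ≠ 0 := Ring.two_ne_zero hchar
  have fixed : tenGen k ≤ AlgHom.equalizer τ (AlgHom.id k (MvPolynomial (Fin 7) k)) := by
    rw [Algebra.adjoin_le_iff]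
    intro x hx
    simp only [Set.mem_insert_iff, Set.mem_singleton_iff] at hx
    rw [SetLike.mem_coe, AlgHom.mem_equalizer]
    rcases hx with rfl | rfl | rfl | rfl | rfl | rfl | rfl | rfl | rfl | rfl <;> simp [hτ]
  have main : AlgHom.equalizer τ (AlgHom.id k (MvPolynomial (Fin 7) k)) = tenGen k := by
    refine le_antisymm (fun p hp => ?_) fixed
    obtain ⟨a, ha, b, hb, c, hc, d, hd, rfl⟩ := exists_decomp p
    have fa : τ a = a := fixed ha
    have fb : τ b = b := fixed hb
    have fc : τ c = c := fixed hc
    have fd : τ d = d := fixed hd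
    rw [AlgHom.mem_equalizer] at hp
    simp only [map_add, map_mul, fa, fb, fc, fd, hτ, AlgHom.id_apply] at hp
    norm_num at hp
    have two' : (2 : MvPolynomial (Fin 7) k) ≠ 0 := by
      rw [← map_ofNat (C : k →+* MvPolynomial (Fin 7) k) 2]
      exact (map_ne_zero_iff _ (C_injective _ _)).2 two
    have hz : b * X 1 + c * X 4 + d * X 6 = 0 :=
      (mul_eq_zero.1 (by linear_combination -hp :
        2 * (b * X 1 + c * X 4 + d * X 6) = 0)).resolve_left two'
    rw [show a + b * X 1 + c * X 4 + d * X 6 = a by linear_combination hz]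
    exact ha
  refine ⟨main, fun T hT => ?_⟩
  have htop : Submodule.span k ((fun t : AlgHom.equalizer τ (AlgHom.id k _) => jet k t) '' T)
      = ⊤ := by
    rw [eq_top_iff]
    intro v _
    obtain ⟨f, hf, rfl⟩ := exists_jet_eq two v
    exact jet_mem_span main hT ⟨f, fixed hf⟩
  calc (10 : Cardinal) = Module.rank k (Fin 10 → k) := by simp
    _ = Module.rank k (⊤ : Submodule k (Fin 10 → k)) := rank_top k (Fin 10 → k) |>.symm
    _ ≤ Cardinal.mk ((fun t : AlgHom.equalizer τ (AlgHom.id k _) => jet k t) '' T) := by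
      rw [← htop]
      exact rank_span_le _
    _ ≤ Cardinal.mk T := Cardinal.mk_image_le
end

section
/- Let k be a field, and let u, v ∈ kˣ be such that the six elements u, u⁻¹, v, v⁻¹, uv, u⁻¹v⁻¹ are pairwise distinct. Set z₁ = diag(uv, v, 1) and z₂ = diag(uv, u, 1) ∈ GL₃(k). Then: (a) the k-linear conjugation operators Ad(z₁) : x ↦ z₁ x z₁⁻¹ and Ad(z₂) : x ↦ z₂ x z₂⁻¹ on the 9-dimensional space of 3×3 matrices over k have equal characteristic polynomials, namely (X−1)³(X−u)(X−u⁻¹)(X−v)(X−v⁻¹)(X−uv)(X−u⁻¹v⁻¹); (b) there exist no c ∈ kˣ and no permutation σ of {1,2,3} such that z₂ = c·diag(t_{σ(1)}, t_{σ(2)}, t_{σ(3)}) where (t₁, t₂, t₃) = (uv, v, 1) are the diagonal entries of z₁. -/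
/-!
The matrix units `Eᵢⱼ` form an eigenbasis of the conjugation operator by `diag(d)`, with eigenvalues
`dᵢ / dⱼ`, so its characteristic polynomial is `∏ (X - dᵢ / dⱼ)` over all pairs `(i, j)`
(`charpoly_conj_diagonal`). For `d = (uv, v, 1)` and for `d = (uv, u, 1)` the ratios with `i ≠ j`
are the same six elements `u, u⁻¹, v, v⁻¹, uv, (uv)⁻¹`.

If `diag(uv, u, 1)` were `c` times a permutation of `diag(uv, v, 1)`, then each of the six
permutations would force a coincidence among these elements: `u = v`, `u = u⁻¹`, `v = v⁻¹`,
`uv = u⁻¹` or `uv = v⁻¹`.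
-/

open Polynomial

/-- Conjugation by an invertible diagonal matrix is diagonal in the basis of matrix units. -/
lemma charpoly_conj_diagonal {k n : Type*} [Field k] [Fintype n] [DecidableEq n]
    (d : n → k) (hd : ∀ i, d i ≠ 0) (A : Matrix n n k →ₗ[k] Matrix n n k)
    (hA : ∀ x, A x = Matrix.diagonal d * x * (Matrix.diagonal d)⁻¹) :
    A.charpoly = ∏ i, ∏ j, (X - C (d i * (d j)⁻¹)) := by
  have hinv : (Matrix.diagonal d)⁻¹ = Matrix.diagonal (fun i => (d i)⁻¹) := by
    apply Matrix.inv_eq_right_inv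
    rw [Matrix.diagonal_mul_diagonal, ← Matrix.diagonal_one]
    congr 1
    funext i
    exact mul_inv_cancel₀ (hd i)
  have hmat : LinearMap.toMatrix (Matrix.stdBasis k n n) (Matrix.stdBasis k n n) A =
      Matrix.diagonal (fun p : n × n => d p.1 * (d p.2)⁻¹) := by
    have hE : ∀ p : n × n, A (Matrix.stdBasis k n n p) =
        (d p.1 * (d p.2)⁻¹) • Matrix.stdBasis k n n p := by
      rintro ⟨i, j⟩
      rw [hA, hinv, Matrix.stdBasis_eq_single]
      ext a b
      rw [Matrix.mul_diagonal, Matrix.diagonal_mul, Matrix.smul_apply, Matrix.single_apply]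
      split_ifs with h
      · obtain ⟨rfl, rfl⟩ := h
        simp
      · simp
    ext p q
    rw [LinearMap.toMatrix_apply, hE, map_smul, Finsupp.smul_apply, Module.Basis.repr_self,
      Matrix.diagonal_apply]
    by_cases h : p = q
    · subst h; simp
    · rw [Finsupp.single_eq_of_ne h]; simp [h]
  rw [← LinearMap.charpoly_toMatrix A (Matrix.stdBasis k n n), hmat, Matrix.charpoly_diagonal,
    Fintype.prod_prod_type]


/-- Popov's counterexample to Grothendieck's question for `PGL₃`: for `u, v ∈ kˣ` with
`u, u⁻¹, v, v⁻¹, uv, u⁻¹v⁻¹` pairwise distinct, the conjugation operators by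
`z₁ = diag(uv, v, 1)` and `z₂ = diag(uv, u, 1)` on `3×3` matrices have the same
characteristic polynomial, namely
`(X−1)³(X−u)(X−u⁻¹)(X−v)(X−v⁻¹)(X−uv)(X−u⁻¹v⁻¹)`, yet `z₂` is not a scalar multiple of a
diagonal matrix obtained from `z₁` by permuting its diagonal entries. -/
theorem killing_polynomial_does_not_separate
    (k : Type*) [Field k] (u v : kˣ)
    (hdist : ([u, u⁻¹, v, v⁻¹, u * v, u⁻¹ * v⁻¹] : List kˣ).Pairwise (· ≠ ·))
    (t : Fin 3 → k) (ht : t = ![(u : k) * v, (v : k), 1])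
    (z₁ z₂ : Matrix (Fin 3) (Fin 3) k)
    (hz₁ : z₁ = Matrix.diagonal t)
    (hz₂ : z₂ = Matrix.diagonal ![(u : k) * v, (u : k), 1])
    (A₁ A₂ : Matrix (Fin 3) (Fin 3) k →ₗ[k] Matrix (Fin 3) (Fin 3) k)
    (hA₁ : ∀ x, A₁ x = z₁ * x * z₁⁻¹)
    (hA₂ : ∀ x, A₂ x = z₂ * x * z₂⁻¹) :
    (A₁.charpoly = A₂.charpoly ∧
      A₁.charpoly =
        (X - 1) ^ 3 * (X - C ((u : k))) * (X - C ((u⁻¹ : kˣ) : k)) *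
          (X - C ((v : k))) * (X - C ((v⁻¹ : kˣ) : k)) *
          (X - C ((u : k) * v)) * (X - C ((u⁻¹ * v⁻¹ : kˣ) : k))) ∧
    ¬ ∃ (c : kˣ) (σ : Equiv.Perm (Fin 3)),
        z₂ = (c : k) • Matrix.diagonal (fun i => t (σ i)) := by
  have hu0 : (u : k) ≠ 0 := u.ne_zero
  have hv0 : (v : k) ≠ 0 := v.ne_zero
  subst ht hz₁ hz₂
  have h₁ := charpoly_conj_diagonal _ (by intro i; fin_cases i <;> simp) A₁ hA₁
  have h₂ := charpoly_conj_diagonal _ (by intro i; fin_cases i <;> simp) A₂ hA₂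
  simp only [Fin.prod_univ_three, Matrix.cons_val_zero, Matrix.cons_val_one,
    Matrix.cons_val] at h₁ h₂
  have e₁ : (u : k) * v * (v : k)⁻¹ = u := by field_simp
  have e₂ : (v : k) * ((u : k) * v)⁻¹ = (u : k)⁻¹ := by field_simp
  have e₃ : (u : k) * v * (u : k)⁻¹ = v := by field_simp
  have e₄ : (u : k) * ((u : k) * v)⁻¹ = (v : k)⁻¹ := by field_simp
  have e₅ : (u : k) * v * ((u : k) * v)⁻¹ = 1 := by field_simp
  have e₆ : (u : k) * (u : k)⁻¹ = 1 := mul_inv_cancel₀ hu0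
  have e₇ : (v : k) * (v : k)⁻¹ = 1 := mul_inv_cancel₀ hv0
  have e₈ : (1 : k) * ((u : k) * v)⁻¹ = (u : k)⁻¹ * (v : k)⁻¹ := by field_simp
  simp only [e₁, e₂, e₅, e₇, e₈, one_mul, mul_one, inv_one, C_1] at h₁
  simp only [e₃, e₄, e₅, e₆, e₈, one_mul, mul_one, inv_one, C_1] at h₂
  refine ⟨⟨?_, ?_⟩, ?_⟩
  · rw [h₁, h₂]; ring
  · rw [h₁]; push_cast; ring
  · rintro ⟨c, σ, h⟩
    have hc : ∀ i, (![(u : k) * v, (u : k), 1] : Fin 3 → k) i =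
        c * (![(u : k) * v, (v : k), 1] : Fin 3 → k) (σ i) := by
      intro i
      simpa using congrFun (congrFun h i) i
    have q0 := hc 0
    have q1 := hc 1
    have q2 := hc 2
    have n01 : σ 0 ≠ σ 1 := fun h => absurd (σ.injective h) (by decide)
    have n02 : σ 0 ≠ σ 2 := fun h => absurd (σ.injective h) (by decide)
    have n12 : σ 1 ≠ σ 2 := fun h => absurd (σ.injective h) (by decide)
    -- The five forbidden coincidences, with denominators cleared.
    have d₁ : (u : k) ≠ v := by
      intro h
      have : u = v := Units.ext h
      simp [this] at hdist
    have d₂ : (u : k) * u ≠ 1 := by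
      intro h
      have : u = u⁻¹ := eq_inv_of_mul_eq_one_left (Units.ext h)
      simp [← this] at hdist
    have d₃ : (v : k) * v ≠ 1 := by
      intro h
      have : v = v⁻¹ := eq_inv_of_mul_eq_one_left (Units.ext h)
      simp [← this] at hdist
    have d₄ : (u : k) * v * u ≠ 1 := by
      intro h
      have : u * v = u⁻¹ := eq_inv_of_mul_eq_one_left (Units.ext h)
      simp [this] at hdist
    have d₅ : (u : k) * v * v ≠ 1 := by
      intro h
      have : u * v = v⁻¹ := eq_inv_of_mul_eq_one_left (Units.ext h)
      simp [this] at hdist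
    clear hc h h₁ h₂ hA₁ hA₂ hdist e₁ e₂ e₃ e₄ e₅ e₆ e₇ e₈
    generalize (c : k) = r at *
    generalize (u : k) = x at *
    generalize (v : k) = y at *
    generalize σ 0 = a at *
    generalize σ 1 = b at *
    generalize σ 2 = e at *
    fin_cases a <;> fin_cases b <;> fin_cases e <;> simp at n01 n02 n12 q0 q1 q2 <;> grind
end

section
/- Let k be an algebraically closed field, let R be an integrally closed domain that is a finitely generated k-algebra, and let G be a finite group acting faithfully on R by k-algebra automorphisms such that for every maximal ideal m of R and every g ∈ G with g ≠ 1 one has g•m ≠ m (the induced action on maximal ideals is free). Then: (a) R is an étale R^G-algebra, where R^G = {r ∈ R : g•r = r for all g ∈ G} is the invariant subring; and (b) the R^G-algebra homomorphism R ⊗_{R^G} R → ∏_{g ∈ G} R determined by a ⊗ b ↦ (a · (g•b))_{g ∈ G} is an isomorphism. -/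
open scoped TensorProduct

/-!
The proof is the Chase–Harrison–Rosenberg argument for Galois extensions of commutative rings.

If `g ≠ 1`, no maximal ideal contains all the differences `r - g • r`, since such an ideal would be
mapped into, hence onto, itself by `g`. So these differences generate the unit ideal, and an element
`t_g` of `R ⊗ R` with `Φ t_g 1 = 1` and `Φ t_g g = 0` can be written down. The product of the `t_g`
is a *separability element* `t = ∑ aᵢ ⊗ bᵢ`, characterised by `∑ aᵢ (g • bᵢ) = δ_{g,1}`
(`exists_canonicalMap_eq_single`).

Everything else is formal from `t`. Writing `tr x = ∑ g • x`, which is invariant, one has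
`r = ∑ aᵢ tr (bᵢ r)`. This exhibits a finite dual basis, so `R` is finite projective over the
invariants; in particular it is flat and of finite presentation. The map
`f ↦ ∑_h ∑ᵢ f h (h • bᵢ) ⊗ aᵢ` is a left inverse of `Φ`, and `∑_h ∑ᵢ f h aᵢ ⊗ h⁻¹ • bᵢ` is a
preimage of `f`, so `Φ` is bijective. Finally `1 ⊗ r - r ⊗ 1` is killed by `t`, as one sees after
applying the injective map `Φ`, and `t` multiplies out to `1`; hence `R` is unramified, and a flat
unramified algebra of finite presentation is étale.
-/

section Torsor

variable (A R G : Type*) [CommRing A] [CommRing R] [Algebra A R] [Group G]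
  [MulSemiringAction G R] [SMulCommClass G A R]

/-- The algebra homomorphism `R ⊗[A] R → ∏_{g ∈ G} R`, `a ⊗ b ↦ (a * (g • b))_g`. -/
noncomputable def canonicalMap : (R ⊗[A] R) →ₐ[A] (G → R) :=
  AlgHom.pi fun g : G =>
    Algebra.TensorProduct.productMap (AlgHom.id A R) (MulSemiringAction.toAlgHom A R g)

variable {A R G}

@[simp]
lemma canonicalMap_tmul (a b : R) (g : G) :
    canonicalMap A R G (a ⊗ₜ[A] b) g = a * (g • b) := by
  simp [canonicalMap]

/-- Freeness on maximal ideals makes the differences `r - g • r` generate the unit ideal. -/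
lemma span_sub_smul_eq_top (g : G)
    (hg : ∀ m : Ideal R, m.IsMaximal → Ideal.map (MulSemiringAction.toRingHom G R g) m ≠ m) :
    Ideal.span (Set.range fun r : R => r - g • r) = ⊤ := by
  by_contra hne
  obtain ⟨m, hm, hle⟩ := Ideal.exists_le_maximal _ hne
  have hsub (r : R) : r - g • r ∈ m := hle (Ideal.subset_span ⟨r, rfl⟩)
  refine hg m hm (le_antisymm (Ideal.map_le_iff_le_comap.2 fun r hr => ?_) fun r hr => ?_)
  · have := m.sub_mem hr (hsub r)
    simpa using this
  · have h : g⁻¹ • r ∈ m := by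
      have := m.add_mem (hsub (g⁻¹ • r)) hr
      simpa using this
    simpa using Ideal.mem_map_of_mem (MulSemiringAction.toRingHom G R g) h

variable (A) in
lemma exists_canonicalMap_separating (g : G)
    (hg : Ideal.span (Set.range fun r : R => r - g • r) = ⊤) :
    ∃ t : R ⊗[A] R, canonicalMap A R G t 1 = 1 ∧ canonicalMap A R G t g = 0 := by
  -- The elements `x = Φ t 1`, with `t` in the kernel of the component of `Φ` at `g`, form an ideal
  -- containing each `r - g • r`, as one sees from `t = 1 ⊗ r - (g • r) ⊗ 1`.
  have key : ∀ x ∈ Ideal.span (Set.range fun r : R => r - g • r),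
      ∃ t : R ⊗[A] R, canonicalMap A R G t 1 = x ∧ canonicalMap A R G t g = 0 := by
    intro x hx
    induction hx using Submodule.span_induction with
    | mem x hx =>
      obtain ⟨r, rfl⟩ := hx
      exact ⟨1 ⊗ₜ r - (g • r) ⊗ₜ 1, by simp, by simp⟩
    | zero => exact ⟨0, by simp, by simp⟩
    | add x y _ _ hx hy =>
      obtain ⟨t, ht, ht'⟩ := hx
      obtain ⟨u, hu, hu'⟩ := hy
      exact ⟨t + u, by simp [ht, hu], by simp [ht', hu']⟩
    | smul c x _ hx =>
      obtain ⟨t, ht, ht'⟩ := hx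
      exact ⟨(c ⊗ₜ 1) * t, by simp [ht], by simp [ht']⟩
  exact key 1 (hg ▸ Submodule.mem_top)

variable (A) in
/-- Existence of the separability element: the idempotent of the identity component of
`∏_{g ∈ G} R` lies in the image of the canonical map. -/
lemma exists_canonicalMap_eq_single [Finite G] [DecidableEq G]
    (hg : ∀ g : G, g ≠ 1 → Ideal.span (Set.range fun r : R => r - g • r) = ⊤) :
    ∃ t : R ⊗[A] R, canonicalMap A R G t = Pi.single 1 1 := by
  have := Fintype.ofFinite G
  choose! t ht ht' using fun g (h : g ≠ 1) => exists_canonicalMap_separating A g (hg g h)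
  refine ⟨∏ g ∈ Finset.univ.erase 1, t g, ?_⟩
  ext h
  rw [map_prod, Finset.prod_apply]
  by_cases hh : h = 1
  · subst hh
    rw [Pi.single_eq_same]
    exact Finset.prod_eq_one fun g hg => ht g (Finset.ne_of_mem_erase hg)
  · rw [Pi.single_eq_of_ne hh]
    exact Finset.prod_eq_zero (Finset.mem_erase.2 ⟨hh, Finset.mem_univ h⟩) (ht' h hh)

section DualBasis

variable [Fintype G] [DecidableEq G] {s : Finset (R × R)}
  (hs : ∀ g : G, ∑ p ∈ s, p.1 * (g • p.2) = if g = 1 then 1 else 0)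
  (τ : R →ₗ[A] A) (hτ : ∀ r : R, algebraMap A R (τ r) = ∑ g : G, g • r)

include hs hτ

/-- The pairs `(aᵢ, tr (bᵢ · _))` form a dual basis of `R` over `A`. -/
lemma sum_trace_smul (r : R) : ∑ p ∈ s, τ (p.2 * r) • p.1 = r := by
  simp only [Algebra.smul_def, hτ, smul_mul', Finset.sum_mul]
  rw [Finset.sum_comm]
  have (g : G) : ∑ p ∈ s, g • p.2 * g • r * p.1 = if g = 1 then r else 0 := by
    have h : ∑ p ∈ s, g • p.2 * g • r * p.1 = (∑ p ∈ s, p.1 * (g • p.2)) * g • r := by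
      rw [Finset.sum_mul]
      exact Finset.sum_congr rfl fun p _ => by ring
    rw [h, hs]
    split_ifs with h1 <;> simp [h1]
  simp [this]

lemma finite_projective_of_separability : Module.Finite A R ∧ Module.Projective A R := by
  let f : (s → A) →ₗ[A] R := Fintype.linearCombination A fun p : s => p.1.1
  let d : R →ₗ[A] (s → A) := LinearMap.pi fun p : s => τ ∘ₗ LinearMap.mulLeft A p.1.2
  have hfd : f ∘ₗ d = LinearMap.id := by
    ext r
    simp only [f, d, LinearMap.comp_apply, Fintype.linearCombination_apply, LinearMap.pi_apply,
      LinearMap.mulLeft_apply, LinearMap.id_apply]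
    rw [Finset.sum_coe_sort s fun p => τ (p.2 * r) • p.1]
    exact sum_trace_smul hs τ hτ r
  exact ⟨Module.Finite.of_surjective f fun r => ⟨d r, LinearMap.congr_fun hfd r⟩,
    Module.Projective.of_split d f hfd⟩

lemma canonicalMap_bijective : Function.Bijective (canonicalMap A R G) := by
  constructor
  · let ψ : (G → R) → R ⊗[A] R := fun f => ∑ p ∈ s, (∑ h : G, f h * h • p.2) ⊗ₜ p.1
    refine Function.LeftInverse.injective (g := ψ) fun t => ?_
    induction t with
    | zero => simp [ψ]
    | add x y hx hy =>
      simp only [ψ, map_add, Pi.add_apply, add_mul, Finset.sum_add_distrib,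
        TensorProduct.add_tmul] at hx hy ⊢
      rw [hx, hy]
    | tmul a b =>
      -- Expand `b` in the dual basis and move the coefficients `tr (bᵢ b) ∈ A` to the left factor.
      conv_rhs => rw [← sum_trace_smul hs τ hτ b, TensorProduct.tmul_sum]
      refine Finset.sum_congr rfl fun p _ => ?_
      rw [← TensorProduct.smul_tmul, Algebra.smul_def, hτ]
      congr 1
      rw [Finset.sum_mul]
      refine Finset.sum_congr rfl fun h _ => ?_
      rw [canonicalMap_tmul, smul_mul']
      ring
  · intro f
    refine ⟨∑ h : G, ∑ p ∈ s, (f h * p.1) ⊗ₜ (h⁻¹ • p.2), ?_⟩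
    ext g
    have (h : G) : ∑ p ∈ s, f h * p.1 * g • h⁻¹ • p.2 = if g = h then f h else 0 := by
      simp only [mul_assoc, ← Finset.mul_sum, ← mul_smul, hs, mul_inv_eq_one]
      simp
    simp [map_sum, Finset.sum_apply, this]

lemma etale_of_separability : Algebra.Etale A R := by
  obtain ⟨_, _⟩ := finite_projective_of_separability hs τ hτ
  have : Module.FinitePresentation A R := Module.finitePresentation_of_projective A R
  have : Algebra.FormallyUnramified A R := by
    rw [Algebra.FormallyUnramified.iff_exists_tensorProduct]
    refine ⟨∑ p ∈ s, p.1 ⊗ₜ p.2, fun r => ?_, ?_⟩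
    · apply (canonicalMap_bijective hs τ hτ).1
      ext g
      simp only [map_mul, map_sub, map_sum, Pi.mul_apply, Pi.sub_apply, Finset.sum_apply,
        canonicalMap_tmul, hs, map_zero, Pi.zero_apply]
      split_ifs with h <;> simp [h]
    · simpa using hs 1
  exact Algebra.Etale.of_formallyUnramified_of_flat

end DualBasis

end Torsor

/-- If a finite group `G` acts faithfully by `k`-algebra automorphisms on an integrally
closed domain `R` of finite type over an algebraically closed field `k`, and the induced
action on maximal ideals is free, then `R` is étale over the invariant subring `R^G`, and
the canonical map `R ⊗_{R^G} R → ∏_{g ∈ G} R`, `a ⊗ b ↦ (a·(g•b))_g`, is an isomorphism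
(i.e., `Spec R → Spec R^G` is a `G`-torsor). -/
theorem etale_torsor_of_free_action
    (k : Type*) [Field k] [IsAlgClosed k]
    (R : Type*) [CommRing R] [IsDomain R] [IsIntegrallyClosed R]
    [Algebra k R] [Algebra.FiniteType k R]
    (G : Type*) [Group G] [Finite G] [MulSemiringAction G R] [SMulCommClass G k R]
    [FaithfulSMul G R]
    (hfree : ∀ m : Ideal R, m.IsMaximal → ∀ g : G, g ≠ 1 →
      Ideal.map (MulSemiringAction.toRingHom G R g) m ≠ m)
    (S : Subalgebra k R) (hS : ∀ r : R, r ∈ S ↔ ∀ g : G, g • r = r) :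
    Algebra.Etale ↥S R ∧
      (∃ Φ : (R ⊗[↥S] R) →ₐ[↥S] (G → R),
          ∀ a b : R, Φ (a ⊗ₜ[↥S] b) = fun g : G => a * (g • b)) ∧
      (∀ Φ : (R ⊗[↥S] R) →ₐ[↥S] (G → R),
          (∀ a b : R, Φ (a ⊗ₜ[↥S] b) = fun g : G => a * (g • b)) →
          Function.Bijective Φ) := by
  classical
  have := Fintype.ofFinite G
  have : SMulCommClass G S R := ⟨fun g a r => by
    rw [Algebra.smul_def, Algebra.smul_def, smul_mul']
    congr 1
    exact (hS _).1 a.2 g⟩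
  obtain ⟨t, ht⟩ := exists_canonicalMap_eq_single S (R := R) (G := G) fun g hg =>
    span_sub_smul_eq_top g fun m hm => hfree m hm g hg
  obtain ⟨s, rfl⟩ := TensorProduct.exists_finset t
  have hs (g : G) : ∑ p ∈ s, p.1 * (g • p.2) = if g = 1 then 1 else 0 := by
    have := congrFun ht g
    rw [Pi.single_apply] at this
    simpa [map_sum, Finset.sum_apply] using this
  let τ : R →ₗ[S] S :=
    { toFun := fun r => ⟨∑ g : G, g • r, (hS _).2 fun h => by
        rw [Finset.smul_sum]
        simp only [← mul_smul]
        exact Fintype.sum_equiv (Equiv.mulLeft h) _ _ fun g => rfl⟩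
      map_add' := fun x y => by
        ext
        simp [Finset.sum_add_distrib]
      map_smul' := fun a x => by
        ext
        simp only [smul_comm _ a x, ← Finset.smul_sum]
        rfl }
  have hτ (r : R) : algebraMap S R (τ r) = ∑ g : G, g • r := rfl
  refine ⟨etale_of_separability hs τ hτ,
    ⟨canonicalMap S R G, fun a b => funext fun g => canonicalMap_tmul a b g⟩, fun Φ hΦ => ?_⟩
  have : Φ = canonicalMap S R G := by
    refine AlgHom.toLinearMap_injective (TensorProduct.ext' fun a b => ?_)
    ext g
    exact (congrFun (hΦ a b) g).trans (canonicalMap_tmul a b g).symm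
  rw [this]
  exact canonicalMap_bijective hs τ hτ
end
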